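/- Let G be a finite simple graph with at least 2 vertices, let r be its rank-width, and let c be its clique-width. Then r ≤ c and c ≤ 2^{r+1} − 1. -/

import Mathlib

open scoped Classical in
/-- The rank over `ℤ/2` of the biadjacency matrix of the bipartition `(A, B)` of the
vertex set of `G`: the `A × B` matrix whose `(a, b)` entry is `1` if `a` and `b` are
adjacent and `0` otherwise.  (It is encoded as a `V × V` matrix padded with zeros
outside `A × B`, which has the same rank.) -/
noncomputable def biadjRank {V : Type*} [Fintype V] (G : SimpleGraph V)
    (A B : Set V) : ℕ :=
  (Matrix.of fun a b : V =>
    if a ∈ A ∧ b ∈ B ∧ G.Adj a b then (1 : ZMod 2) else 0).rank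

/-- The rank-width of `G`: the minimum, over all rank decompositions — finite trees
`T` in which every vertex has degree 1 or 3 and whose leaves are in bijection with
the vertices of `G` — of the maximum, over the edges of `T`, of the rank over `ℤ/2`
of the biadjacency matrix of the bipartition of the vertex set induced by the two
components of `T` minus that edge. -/
noncomputable def rankWidth {V : Type*} [Fintype V] (G : SimpleGraph V) : ℕ :=
  sInf {r : ℕ | ∃ (W : Type) (T : SimpleGraph W), Finite W ∧ T.IsTree ∧
    (∀ w : W, (T.neighborSet w).ncard = 1 ∨ (T.neighborSet w).ncard = 3) ∧
    ∃ f : V → W, Function.Injective f ∧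
      (∀ w : W, (T.neighborSet w).ncard = 1 ↔ w ∈ Set.range f) ∧
      ∀ a b : W, T.Adj a b →
        biadjRank G {v : V | (T.deleteEdges {s(a, b)}).Reachable (f v) a}
                    {v : V | (T.deleteEdges {s(a, b)}).Reachable (f v) b} ≤ r}

/-- Clique-width expressions over `c` labels: create a single labelled vertex,
take a disjoint union, relabel all vertices of one label to another label, or
join all pairs consisting of a vertex of one label and one of another label. -/
inductive CW (c : ℕ) : Type where
  | single : Fin c → CW c
  | union : CW c → CW c → CW c
  | relabel : Fin c → Fin c → CW c → CW c
  | join : Fin c → Fin c → CW c → CW c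

/-- The vertex type of the labelled graph built by a clique-width expression. -/
def CW.Vt {c : ℕ} : CW c → Type
  | .single _ => Unit
  | .union a b => a.Vt ⊕ b.Vt
  | .relabel _ _ a => a.Vt
  | .join _ _ a => a.Vt

/-- The labelling of the labelled graph built by a clique-width expression. -/
def CW.label {c : ℕ} : (e : CW c) → e.Vt → Fin c
  | .single l, _ => l
  | .union a _, Sum.inl v => a.label v
  | .union _ b, Sum.inr v => b.label v
  | .relabel x y a, v => if a.label v = x then y else a.label v
  | .join _ _ a, v => a.label v

/-- The adjacency relation of the labelled graph built by a clique-width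
expression; the join operation applies only to two *distinct* labels. -/
def CW.adj {c : ℕ} : (e : CW c) → e.Vt → e.Vt → Prop
  | .single _, _, _ => False
  | .union a _, Sum.inl u, Sum.inl v => a.adj u v
  | .union _ b, Sum.inr u, Sum.inr v => b.adj u v
  | .union _ _, Sum.inl _, Sum.inr _ => False
  | .union _ _, Sum.inr _, Sum.inl _ => False
  | .relabel _ _ a, u, v => a.adj u v
  | .join x y a, u, v =>
      a.adj u v ∨ (x ≠ y ∧ ((a.label u = x ∧ a.label v = y) ∨
        (a.label u = y ∧ a.label v = x)))

/-- The clique-width of a graph `G`: the minimum number `c` of labels for which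
some clique-width expression over `c` labels builds a labelled graph whose
underlying graph is isomorphic to `G`. -/
noncomputable def cliqueWidth {V : Type*} (G : SimpleGraph V) : ℕ :=
  sInf {c : ℕ | ∃ (e : CW c) (φ : V ≃ e.Vt),
    ∀ u v : V, G.Adj u v ↔ e.adj (φ u) (φ v)}


namespace RWCW

open scoped Classical in
theorem biadjRank_mono {V : Type*} [Fintype V] (G : SimpleGraph V) {A B A' B' : Set V}
    (hA : A ⊆ A') (hB : B ⊆ B') : biadjRank G A B ≤ biadjRank G A' B' := by
  unfold biadjRank
  have h : (Matrix.of fun a b : V =>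
      if a ∈ A ∧ b ∈ B ∧ G.Adj a b then (1 : ZMod 2) else 0) =
      Matrix.diagonal (fun a => if a ∈ A then (1 : ZMod 2) else 0) *
      ((Matrix.of fun a b : V =>
        if a ∈ A' ∧ b ∈ B' ∧ G.Adj a b then (1 : ZMod 2) else 0) *
      Matrix.diagonal (fun b => if b ∈ B then (1 : ZMod 2) else 0)) := by
    ext i j
    rw [Matrix.diagonal_mul, Matrix.mul_diagonal]
    simp only [Matrix.of_apply]
    by_cases h1 : i ∈ A
    · by_cases h2 : j ∈ B
      · simp [h1, h2, hA h1, hB h2]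
      · simp [h2]
    · simp [h1]
  rw [h]
  exact (Matrix.rank_mul_le_right _ _).trans (Matrix.rank_mul_le_left _ _)

theorem biadjRank_symm {V : Type*} [Fintype V] (G : SimpleGraph V) (A B : Set V) :
    biadjRank G A B = biadjRank G B A := by
  unfold biadjRank
  rw [← Matrix.rank_transpose]
  congr 1
  ext i j
  simp only [Matrix.transpose_apply, Matrix.of_apply]
  congr 1
  simp only [G.adj_comm j i]
  apply propext
  tauto

/-- cut-rank -/
noncomputable def cutR {V : Type*} [Fintype V] (G : SimpleGraph V) (A : Set V) : ℕ :=
  biadjRank G A Aᶜ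

open scoped Classical in
theorem cutR_eq {V : Type*} [Fintype V] (G : SimpleGraph V) (A : Set V) : cutR G A =
    (Matrix.of fun a b : V => if a ∈ A ∧ b ∉ A ∧ G.Adj a b then (1 : ZMod 2) else 0).rank := by
  unfold cutR biadjRank
  congr 1
  ext i j
  simp only [Matrix.of_apply, Set.mem_compl_iff]

open scoped Classical in
theorem cutR_univ {V : Type*} [Fintype V] (G : SimpleGraph V) (r : ℕ) :
    cutR G Set.univ ≤ r := by
  have key : ∀ A : Set V, A = Set.univ → cutR G A ≤ r := by
    intro A hA
    rw [cutR_eq]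
    have : (Matrix.of fun a b : V => if a ∈ A ∧ b ∉ A ∧ G.Adj a b
      then (1 : ZMod 2) else 0) = 0 := by
      ext i j; simp [hA]
    rw [this, Matrix.rank_zero]
    exact Nat.zero_le _
  exact key _ rfl

theorem cutR_le_card {V : Type*} [Fintype V] (G : SimpleGraph V) (A : Set V) :
    cutR G A ≤ Fintype.card V := by
  rw [cutR_eq]
  exact Matrix.rank_le_card_width _

open scoped Classical in
/-- Rows determined by `c` labels: cut-rank at most `c`. -/
theorem cutR_le_of_label {V : Type*} [Fintype V] (G : SimpleGraph V) (A : Set V) (c : ℕ)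
    (g : A → Fin c)
    (h : ∀ u v : A, g u = g v → ∀ w, w ∉ A → (G.Adj u w ↔ G.Adj v w)) : cutR G A ≤ c := by
  rw [cutR_eq]
  have : (Matrix.of fun a b : V => if a ∈ A ∧ b ∉ A ∧ G.Adj a b
    then (1 : ZMod 2) else 0) =
      (Matrix.of fun (a : V) (i : Fin c) => if ∃ ha : a ∈ A, g ⟨a, ha⟩ = i then (1 : ZMod 2) else 0) *
      (Matrix.of fun (i : Fin c) (b : V) =>
        if ∃ u : A, g u = i ∧ b ∉ A ∧ G.Adj u b then (1 : ZMod 2) else 0) := by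
    ext a b
    rw [Matrix.mul_apply]
    simp only [Matrix.of_apply]
    by_cases ha : a ∈ A
    · rw [Finset.sum_eq_single (g ⟨a, ha⟩)]
      · have : (∃ ha' : a ∈ A, g ⟨a, ha'⟩ = g ⟨a, ha⟩) := ⟨ha, rfl⟩
        rw [if_pos this, one_mul]
        congr 1
        apply propext
        constructor
        · rintro ⟨_, h1, h2⟩
          exact ⟨⟨a, ha⟩, rfl, h1, h2⟩
        · rintro ⟨u, h1, h2, h3⟩
          exact ⟨ha, h2, (h u ⟨a, ha⟩ h1 b h2).1 h3⟩
      · intro i _ hi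
        rw [if_neg, zero_mul]
        rintro ⟨_, h⟩
        exact hi h.symm
      · simp
    · rw [Finset.sum_eq_zero]
      · simp [ha]
      · intro i _
        rw [if_neg, zero_mul]
        rintro ⟨h, _⟩
        exact ha h
  rw [this]
  refine (Matrix.rank_mul_le_right _ _).trans ?_
  refine (Matrix.rank_le_card_height _).trans ?_
  simp

/-- outside neighbours -/
def nb {V : Type*} (G : SimpleGraph V) (A : Set V) (u : V) : Set V := {v | v ∉ A ∧ G.Adj u v}

open scoped Classical in
/-- number of nonempty outside neighbourhoods -/
theorem ncard_nb {V : Type*} [Fintype V] (G : SimpleGraph V) (A : Set V) (r : ℕ)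
    (h : cutR G A ≤ r) : (nb G A '' A \ {∅}).ncard ≤ 2 ^ r - 1 := by
  rw [cutR_eq] at h
  set M : Matrix V V (ZMod 2) := (Matrix.of fun a b : V => if a ∈ A ∧ b ∉ A ∧ G.Adj a b
    then (1 : ZMod 2) else 0) with hM
  rw [Matrix.rank_eq_finrank_span_row] at h
  set S := Submodule.span (ZMod 2) (Set.range M.row) with hS
  have hc : Nat.card S = 2 ^ Module.finrank (ZMod 2) S := by
    rw [Module.natCard_eq_pow_finrank (K := ZMod 2)]; simp
  have hc' : (S : Set (V → ZMod 2)).ncard = 2 ^ Module.finrank (ZMod 2) S := by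
    rw [← hc]; rfl
  have h1 : ((S : Set (V → ZMod 2)) \ {0}).ncard = 2 ^ Module.finrank (ZMod 2) S - 1 := by
    rw [Set.ncard_sdiff_singleton_of_mem (by simp), hc']
  have h2 : (2:ℕ) ^ Module.finrank (ZMod 2) S ≤ 2 ^ r := Nat.pow_le_pow_right (by norm_num) h
  refine le_trans ?_ (h1.le.trans (Nat.sub_le_sub_right h2 1))
  refine Set.ncard_le_ncard_of_injOn (fun s v => if v ∈ s then (1 : ZMod 2) else 0) ?_ ?_
    (Set.toFinite _)
  · rintro _ ⟨⟨u, hu, rfl⟩, hne⟩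
    refine ⟨?_, ?_⟩
    · apply Submodule.subset_span
      refine ⟨u, ?_⟩
      ext v
      simp only [hM, nb, hu, Matrix.row, Matrix.of_apply, true_and, Set.mem_ofPred_eq]
      congr
    · intro h0
      apply hne
      ext v
      have := congrFun h0 v
      simpa using this
  · intro s _ t _ hst
    ext v
    have := congrFun hst v
    simp only at this
    by_cases h1 : v ∈ s <;> by_cases h2 : v ∈ t <;> simp_all

/-- Rooted binary decompositions, as a predicate on sets. -/
inductive Dec {V : Type*} (P : Set V → Prop) : Set V → Prop
  | leaf (v : V) : P {v} → Dec P {v}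
  | node (A B : Set V) : Dec P A → Dec P B → Disjoint A B → P (A ∪ B) → Dec P (A ∪ B)

theorem Dec.holds {V : Type*} {P : Set V → Prop} {A : Set V} (h : Dec P A) : P A := by
  cases h <;> assumption

theorem Dec.nonempty {V : Type*} {P : Set V → Prop} {A : Set V} (h : Dec P A) : A.Nonempty := by
  induction h with
  | leaf v _ => exact ⟨v, rfl⟩
  | node A B _ _ _ _ h1 _ => exact h1.mono Set.subset_union_left

theorem Dec.trivial {V : Type*} [Finite V] {P : Set V → Prop} (hP : ∀ A, P A) (A : Set V)
    (hA : A.Nonempty) : Dec P A := by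
  have hf := Set.toFinite A
  induction A, hf using Set.Finite.induction_on with
  | empty => simp at hA
  | @insert a s ha _ ih =>
    rcases s.eq_empty_or_nonempty with rfl | hs
    · simpa using Dec.leaf a (hP _)
    · rw [Set.insert_eq]
      exact Dec.node _ _ (Dec.leaf a (hP _)) (ih hs) (by simpa using ha) (hP _)

/-- Clique-width expression gives a decomposition. -/
theorem dec_of_cw {V : Type*} [Fintype V] (G : SimpleGraph V) {c : ℕ} (e : CW c) :
    ∀ (φ : e.Vt → V) (R : Fin c → Fin c → Prop), Function.Injective φ →
    (∀ u v, G.Adj (φ u) (φ v) ↔ (e.adj u v ∨ (u ≠ v ∧ R (e.label u) (e.label v)))) →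
    (∀ u v, e.label u = e.label v → ∀ w, w ∉ Set.range φ → (G.Adj (φ u) w ↔ G.Adj (φ v) w)) →
    Dec (fun A => cutR G A ≤ c) (Set.range φ) := by
  have key : ∀ (e : CW c) (φ : e.Vt → V), Function.Injective φ →
    (∀ u v, e.label u = e.label v → ∀ w, w ∉ Set.range φ → (G.Adj (φ u) w ↔ G.Adj (φ v) w)) →
    cutR G (Set.range φ) ≤ c := by
    intro e φ hφ h
    apply cutR_le_of_label G _ c (fun a => e.label a.2.choose)
    intro u v huv w hw
    have := h _ _ huv w hw
    rwa [u.2.choose_spec, v.2.choose_spec] at this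
  induction e with
  | single l =>
    intro φ R hφ hadj hout
    have hk := key _ φ hφ hout
    have : Set.range φ = {φ ()} := by
      ext x; constructor
      · rintro ⟨u, rfl⟩; rfl
      · rintro rfl; exact ⟨_, rfl⟩
    rw [this] at hk ⊢
    exact Dec.leaf _ hk
  | union a b iha ihb =>
    intro φ R hφ hadj hout
    have hk := key _ φ hφ hout
    have hr : Set.range φ = Set.range (fun x => φ (Sum.inl x)) ∪ Set.range (fun x => φ (Sum.inr x)) := by
      ext x; constructor
      · rintro ⟨u | u, rfl⟩
        · exact Or.inl ⟨u, rfl⟩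
        · exact Or.inr ⟨u, rfl⟩
      · rintro (⟨u, rfl⟩ | ⟨u, rfl⟩)
        · exact ⟨_, rfl⟩
        · exact ⟨_, rfl⟩
    rw [hr] at hk ⊢
    refine Dec.node _ _ (iha _ R ?_ ?_ ?_) (ihb _ R ?_ ?_ ?_) ?_ hk
    · intro x y h; exact Sum.inl_injective (hφ h)
    · intro u v
      refine (hadj (Sum.inl u) (Sum.inl v)).trans (or_congr Iff.rfl (and_congr ?_ Iff.rfl))
      exact not_congr (Sum.inl_injective.eq_iff)
    · intro u v huv w hw
      by_cases hw' : w ∈ Set.range φ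
      · obtain ⟨x | x, rfl⟩ := hw'
        · exact absurd ⟨x, rfl⟩ hw
        · rw [hadj (Sum.inl u) (Sum.inr x), hadj (Sum.inl v) (Sum.inr x)]
          have e1 : (CW.union a b).label (Sum.inl u) = (CW.union a b).label (Sum.inl v) := huv
          rw [e1]
          have e2 : (Sum.inl u : a.Vt ⊕ b.Vt) ≠ Sum.inr x := by simp
          have e3 : (Sum.inl v : a.Vt ⊕ b.Vt) ≠ Sum.inr x := by simp
          exact or_congr Iff.rfl (and_congr (iff_of_true e2 e3) Iff.rfl)
      · exact hout (Sum.inl u) (Sum.inl v) huv w hw'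
    · intro x y h; exact Sum.inr_injective (hφ h)
    · intro u v
      refine (hadj (Sum.inr u) (Sum.inr v)).trans (or_congr Iff.rfl (and_congr ?_ Iff.rfl))
      exact not_congr (Sum.inr_injective.eq_iff)
    · intro u v huv w hw
      by_cases hw' : w ∈ Set.range φ
      · obtain ⟨x | x, rfl⟩ := hw'
        · rw [hadj (Sum.inr u) (Sum.inl x), hadj (Sum.inr v) (Sum.inl x)]
          have e1 : (CW.union a b).label (Sum.inr u) = (CW.union a b).label (Sum.inr v) := huv
          rw [e1]
          have e2 : (Sum.inr u : a.Vt ⊕ b.Vt) ≠ Sum.inl x := by simp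
          have e3 : (Sum.inr v : a.Vt ⊕ b.Vt) ≠ Sum.inl x := by simp
          exact or_congr Iff.rfl (and_congr (iff_of_true e2 e3) Iff.rfl)
        · exact absurd ⟨x, rfl⟩ hw
      · exact hout (Sum.inr u) (Sum.inr v) huv w hw'
    · rw [Set.disjoint_left]
      rintro _ ⟨x, rfl⟩ ⟨y, h⟩
      have := hφ h
      cases this
  | relabel x y a iha =>
    intro φ R hφ hadj hout
    refine iha φ (fun i j => R (if i = x then y else i) (if j = x then y else j)) hφ ?_ ?_
    · intro u v
      exact hadj u v
    · intro u v huv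
      apply hout
      change (if a.label u = x then y else a.label u) = (if a.label v = x then y else a.label v)
      rw [huv]
  | join x y a iha =>
    intro φ R hφ hadj hout
    refine iha φ (fun i j => R i j ∨ (x ≠ y ∧ ((i = x ∧ j = y) ∨ (i = y ∧ j = x)))) hφ ?_ ?_
    · intro u v
      refine (hadj u v).trans ?_
      change ((a.adj u v ∨ (x ≠ y ∧ ((a.label u = x ∧ a.label v = y) ∨
        (a.label u = y ∧ a.label v = x)))) ∨ (u ≠ v ∧ R (a.label u) (a.label v))) ↔ _
      by_cases huv : u = v
      · subst huv
        constructor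
        · rintro ((h | ⟨h, ⟨h1, h2⟩ | ⟨h1, h2⟩⟩) | h)
          · exact Or.inl h
          · exact absurd (h1.symm.trans h2) h
          · exact absurd (h2.symm.trans h1) h
          · exact absurd rfl h.1
        · rintro (h | h)
          · exact Or.inl (Or.inl h)
          · exact absurd rfl h.1
      · tauto
    · intro u v huv
      exact hout u v huv


/-- Two graphs joined by an edge. -/
def jG {W₁ W₂ : Type} (T₁ : SimpleGraph W₁) (p : W₁) (T₂ : SimpleGraph W₂) (q : W₂) :
    SimpleGraph (W₁ ⊕ W₂) where
  Adj x y := match x, y with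
    | Sum.inl a, Sum.inl b => T₁.Adj a b
    | Sum.inr a, Sum.inr b => T₂.Adj a b
    | Sum.inl a, Sum.inr b => a = p ∧ b = q
    | Sum.inr b, Sum.inl a => a = p ∧ b = q
  symm := ⟨by
    rintro (a | a) (b | b) h
    · exact T₁.symm.symm _ _ h
    · exact h
    · exact h
    · exact T₂.symm.symm _ _ h⟩
  loopless := ⟨by
    rintro (a | a) h
    · exact T₁.irrefl h
    · exact T₂.irrefl h⟩

section
variable {W₁ W₂ : Type} (T₁ : SimpleGraph W₁) (p : W₁) (T₂ : SimpleGraph W₂) (q : W₂)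

theorem jG_ll (a b : W₁) : (jG T₁ p T₂ q).Adj (Sum.inl a) (Sum.inl b) ↔ T₁.Adj a b := Iff.rfl
theorem jG_rr (a b : W₂) : (jG T₁ p T₂ q).Adj (Sum.inr a) (Sum.inr b) ↔ T₂.Adj a b := Iff.rfl
theorem jG_lr (a : W₁) (b : W₂) :
    (jG T₁ p T₂ q).Adj (Sum.inl a) (Sum.inr b) ↔ (a = p ∧ b = q) := Iff.rfl
theorem jG_rl (a : W₁) (b : W₂) :
    (jG T₁ p T₂ q).Adj (Sum.inr b) (Sum.inl a) ↔ (a = p ∧ b = q) := Iff.rfl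

theorem jG_connected (h₁ : T₁.Connected) (h₂ : T₂.Connected) : (jG T₁ p T₂ q).Connected := by
  let i₁ : T₁ →g jG T₁ p T₂ q := ⟨Sum.inl, fun h => h⟩
  let i₂ : T₂ →g jG T₁ p T₂ q := ⟨Sum.inr, fun h => h⟩
  have hpq : (jG T₁ p T₂ q).Reachable (Sum.inr q) (Sum.inl p) :=
    SimpleGraph.Adj.reachable ((jG_rl T₁ p T₂ q p q).2 ⟨rfl, rfl⟩)
  have key : ∀ x, (jG T₁ p T₂ q).Reachable x (Sum.inl p) := by
    rintro (a | a)
    · exact (h₁.preconnected a p).map i₁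
    · exact ((h₂.preconnected a q).map i₂).trans hpq
  have : Nonempty (W₁ ⊕ W₂) := ⟨Sum.inl p⟩
  exact SimpleGraph.Connected.mk fun x y => (key x).trans (key y).symm

open scoped Classical in
theorem jG_deg_l [Finite W₁] (w : W₁) :
    ((jG T₁ p T₂ q).neighborSet (Sum.inl w)).ncard =
      (T₁.neighborSet w).ncard + (if w = p then 1 else 0) := by
  have hi : (Sum.inl '' T₁.neighborSet w : Set (W₁ ⊕ W₂)).ncard = (T₁.neighborSet w).ncard :=
    Set.ncard_image_of_injective _ Sum.inl_injective
  by_cases h : w = p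
  · rw [if_pos h, ← hi, ← Set.ncard_insert_of_notMem (a := (Sum.inr q : W₁ ⊕ W₂)) (by simp)
      (Set.toFinite _)]
    congr 1
    ext (x | x)
    · simp [jG_ll]
    · simp [jG_lr, h]
  · rw [if_neg h, ← hi, add_zero]
    congr 1
    ext (x | x)
    · simp [jG_ll]
    · simp [jG_lr, h]

open scoped Classical in
theorem jG_deg_r [Finite W₂] (w : W₂) :
    ((jG T₁ p T₂ q).neighborSet (Sum.inr w)).ncard =
      (T₂.neighborSet w).ncard + (if w = q then 1 else 0) := by
  have hi : (Sum.inr '' T₂.neighborSet w : Set (W₁ ⊕ W₂)).ncard = (T₂.neighborSet w).ncard :=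
    Set.ncard_image_of_injective _ Sum.inr_injective
  by_cases h : w = q
  · rw [if_pos h, ← hi, ← Set.ncard_insert_of_notMem (a := (Sum.inl p : W₁ ⊕ W₂)) (by simp)
      (Set.toFinite _)]
    congr 1
    ext (x | x)
    · simp [jG_rl, h]
    · simp [jG_rr]
  · rw [if_neg h, ← hi, add_zero]
    congr 1
    ext (x | x)
    · simp [jG_rl, h]
    · simp [jG_rr]

end

open scoped Classical in
/-- missing degree at the root -/
noncomputable def xt {W : Type} (k : ℕ) (ρ w : W) : ℕ := if w = ρ then k else 0

theorem xt_self {W : Type} (k : ℕ) (ρ : W) : xt k ρ ρ = k := by simp [xt]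
theorem xt_ne {W : Type} (k : ℕ) {ρ w : W} (h : w ≠ ρ) : xt k ρ w = 0 := by simp [xt, h]
theorem xt_zero {W : Type} (ρ w : W) : xt 0 ρ w = 0 := by simp [xt]

open scoped Classical in
/-- Partial rank decomposition for `A`, whose root `ρ` still misses `k` edges. -/
def RT {V : Type*} (P : Set V → Prop) (k : ℕ) (A : Set V) : Prop :=
  ∃ (W : Type) (T : SimpleGraph W) (ρ : W) (f : V → W), Finite W ∧ T.Connected ∧
    (∀ w, (T.neighborSet w).ncard + xt k ρ w = 1 ∨
      (T.neighborSet w).ncard + xt k ρ w = 3) ∧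
    Set.InjOn f A ∧
    (∀ w, (T.neighborSet w).ncard + xt k ρ w = 1 ↔ w ∈ f '' A) ∧
    ∀ a b, T.Adj a b → ∃ S : Set W, ρ ∉ S ∧ (a ∈ S ↔ b ∉ S) ∧
      (∀ x y, T.Adj x y → x ∈ S → y ∉ S → s(x, y) = s(a, b)) ∧ P {v | v ∈ A ∧ f v ∈ S}

theorem RT.leaf {V : Type*} (P : Set V → Prop) (v : V) : RT P 1 {v} := by
  refine ⟨Unit, ⊥, (), fun _ => (), inferInstance, ?_, ?_, ?_, ?_, ?_⟩
  · exact SimpleGraph.Connected.mk fun x y => SimpleGraph.Reachable.refl _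
  · intro w; simp [xt]
  · simp
  · intro w; simp [xt]
  · intro a b h; simp at h

theorem RT.point {V : Type*} (P : Set V → Prop) : RT P 3 ∅ := by
  refine ⟨Unit, ⊥, (), fun _ => (), inferInstance, ?_, ?_, ?_, ?_, ?_⟩
  · exact SimpleGraph.Connected.mk fun x y => SimpleGraph.Reachable.refl _
  · intro w; simp [xt]
  · simp
  · intro w; simp [xt]
  · intro a b h; simp at h

open scoped Classical in
theorem RT.join {V : Type*} {P : Set V → Prop} {k : ℕ} {A B : Set V} (hA : RT P (k + 1) A)
    (hB : RT P 1 B) (hd : Disjoint A B) (hP : P B) : RT P k (A ∪ B) := by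
  obtain ⟨W₁, T₁, p, f₁, _, hc₁, hd₁, hi₁, hl₁, hs₁⟩ := hA
  obtain ⟨W₂, T₂, q, f₂, _, hc₂, hd₂, hi₂, hl₂, hs₂⟩ := hB
  have hBA : ∀ v ∈ B, v ∉ A := fun v hv hv' => Set.disjoint_left.1 hd hv' hv
  have eql : ∀ w, ((jG T₁ p T₂ q).neighborSet (Sum.inl w)).ncard +
      xt (W := W₁ ⊕ W₂) k (Sum.inl p) (Sum.inl w) =
      (T₁.neighborSet w).ncard + xt (k+1) p w := by
    intro w
    rw [jG_deg_l]
    by_cases h : w = p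
    · subst h; simp [xt_self]; omega
    · simp [h, xt]
  have eqr : ∀ w, ((jG T₁ p T₂ q).neighborSet (Sum.inr w)).ncard +
      xt (W := W₁ ⊕ W₂) k (Sum.inl p) (Sum.inr w) =
      (T₂.neighborSet w).ncard + xt 1 q w := by
    intro w
    rw [jG_deg_r]
    simp [xt]
  refine ⟨W₁ ⊕ W₂, jG T₁ p T₂ q, Sum.inl p,
    fun v => if v ∈ A then Sum.inl (f₁ v) else Sum.inr (f₂ v), inferInstance,
    jG_connected _ _ _ _ hc₁ hc₂, ?_, ?_, ?_, ?_⟩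
  · rintro (w | w)
    · rw [eql]; exact hd₁ w
    · rw [eqr]; exact hd₂ w
  · rintro u (hu | hu) v (hv | hv) huv
    · simp only [hu, hv, if_true] at huv
      exact hi₁ hu hv (Sum.inl_injective huv)
    · simp [hu, hBA v hv] at huv
    · simp [hv, hBA u hu] at huv
    · simp only [hBA v hv, hBA u hu, if_false] at huv
      exact hi₂ hu hv (Sum.inr_injective huv)
  · rintro (w | w)
    · rw [eql, hl₁]
      constructor
      · rintro ⟨v, hv, rfl⟩
        exact ⟨v, Or.inl hv, by simp [hv]⟩
      · rintro ⟨v, hv | hv, h⟩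
        · simp only [hv, if_true] at h
          exact ⟨v, hv, Sum.inl_injective h⟩
        · simp [hBA v hv] at h
    · rw [eqr, hl₂]
      constructor
      · rintro ⟨v, hv, rfl⟩
        exact ⟨v, Or.inr hv, by simp [hBA v hv]⟩
      · rintro ⟨v, hv | hv, h⟩
        · simp [hv] at h
        · simp only [hBA v hv, if_false] at h
          exact ⟨v, hv, Sum.inr_injective h⟩
  · have cross : ∀ a b, a = p → b = q → ∃ S : Set (W₁ ⊕ W₂), Sum.inl p ∉ S ∧
        (Sum.inl a ∉ S) ∧ (Sum.inr b ∈ S) ∧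
      (∀ x y, (jG T₁ p T₂ q).Adj x y → x ∈ S → y ∉ S → s(x, y) = s(Sum.inl a, Sum.inr b)) ∧
      P {v | v ∈ A ∪ B ∧ (if v ∈ A then Sum.inl (f₁ v) else Sum.inr (f₂ v)) ∈ S} := by
      rintro a b rfl rfl
      refine ⟨Set.range Sum.inr, by simp, by simp, by simp, ?_, ?_⟩
      · rintro (x | x) (y | y) h hx hy
        · simp at hx
        · simp at hx
        · rw [jG_rl] at h
          rw [h.1, h.2]; exact Sym2.eq_swap
        · simp at hy
      · convert hP using 1
        ext v
        constructor
        · rintro ⟨hv | hv, h⟩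
          · simp [hv] at h
          · exact hv
        · intro hv
          exact ⟨Or.inr hv, by simp [hBA v hv]⟩
    rintro (a | a) (b | b) h
    · obtain ⟨S, h1, h2, h3, h4⟩ := hs₁ a b h
      refine ⟨Sum.inl '' S, by simpa using h1, by simpa using h2, ?_, ?_⟩
      · rintro (x | x) (y | y) hxy hx hy
        · have := h3 x y hxy (by simpa using hx) (by simpa using hy)
          simpa using this
        · rw [jG_lr] at hxy
          simp [hxy.1] at hx
          exact absurd hx h1
        · simp at hx
        · simp at hx
      · convert h4 using 1
        ext v
        constructor
        · rintro ⟨hv | hv, h⟩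
          · simp [hv] at h
            exact ⟨hv, h⟩
          · simp [hBA v hv] at h
        · rintro ⟨hv, h⟩
          exact ⟨Or.inl hv, by simpa [hv] using h⟩
    · obtain ⟨S, h1, h2, h3, h4, h5⟩ := cross a b h.1 h.2
      exact ⟨S, h1, by tauto, h4, h5⟩
    · obtain ⟨S, h1, h2, h3, h4, h5⟩ := cross b a h.1 h.2
      refine ⟨S, h1, by tauto, ?_, h5⟩
      intro x y hxy hx hy
      rw [h4 x y hxy hx hy]; exact Sym2.eq_swap
    · obtain ⟨S, h1, h2, h3, h4⟩ := hs₂ a b h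
      refine ⟨Sum.inr '' S, by simp, by simpa using h2, ?_, ?_⟩
      · rintro (x | x) (y | y) hxy hx hy
        · simp at hx
        · simp at hx
        · rw [jG_rl] at hxy
          simp [hxy.2] at hx
          exact absurd hx h1
        · have := h3 x y hxy (by simpa using hx) (by simpa using hy)
          simpa using this
      · convert h4 using 1
        ext v
        constructor
        · rintro ⟨hv | hv, h⟩
          · simp [hv] at h
          · simp [hBA v hv] at h
            exact ⟨hv, h⟩
        · rintro ⟨hv, h⟩
          exact ⟨Or.inr hv, by simpa [hBA v hv] using h⟩

theorem RT.of_dec {V : Type*} {P : Set V → Prop} {A : Set V} (h : Dec P A) : RT P 1 A := by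
  induction h with
  | leaf v _ => exact RT.leaf P v
  | node A B hA hB hd _ h1 h2 =>
    have := ((RT.point P).join h1 (by simp) hA.holds).join h2 (by simpa using hd) hB.holds
    simpa using this

theorem RT.of_dec_univ {V : Type*} [Fintype V] (hV : 2 ≤ Fintype.card V) {P : Set V → Prop}
    (h : Dec P Set.univ) : RT P 0 Set.univ := by
  have : ∀ A, Dec P A → A = Set.univ → RT P 0 Set.univ := by
    intro A hA
    cases hA with
    | leaf v _ =>
      intro h
      exfalso
      have := Fintype.card_le_one_iff.2 (fun a b : V => by
        have ha : a ∈ ({v} : Set V) := h ▸ Set.mem_univ a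
        have hb : b ∈ ({v} : Set V) := h ▸ Set.mem_univ b
        simp at ha hb; rw [ha, hb])
      omega
    | node A B hA hB hd hp =>
      intro h
      rw [← h]
      exact (RT.of_dec hA).join (RT.of_dec hB) hd hB.holds
  exact this _ h rfl

theorem reach_side {W : Type} (T : SimpleGraph W) (a b : W) (S : Set W)
    (hS : ∀ x y, T.Adj x y → x ∈ S → y ∉ S → s(x, y) = s(a, b)) {x y : W}
    (h : (T.deleteEdges {s(a, b)}).Reachable x y) : x ∈ S ↔ y ∈ S := by
  obtain ⟨w⟩ := h
  induction w with
  | nil => rfl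
  | @cons u v w h _ ih =>
    rw [← ih]
    rw [SimpleGraph.deleteEdges_adj] at h
    constructor
    · intro hu
      by_contra hv
      exact h.2 (hS _ _ h.1 hu hv)
    · intro hv
      by_contra hu
      apply h.2
      have := hS _ _ h.1.symm hv hu
      rw [Sym2.eq_swap] at this
      exact this

/-- The set whose infimum is the rank-width. -/
def RWset {V : Type*} [Fintype V] (G : SimpleGraph V) : Set ℕ :=
  {r : ℕ | ∃ (W : Type) (T : SimpleGraph W), Finite W ∧ T.IsTree ∧
    (∀ w : W, (T.neighborSet w).ncard = 1 ∨ (T.neighborSet w).ncard = 3) ∧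
    ∃ f : V → W, Function.Injective f ∧
      (∀ w : W, (T.neighborSet w).ncard = 1 ↔ w ∈ Set.range f) ∧
      ∀ a b : W, T.Adj a b →
        biadjRank G {v : V | (T.deleteEdges {s(a, b)}).Reachable (f v) a}
                    {v : V | (T.deleteEdges {s(a, b)}).Reachable (f v) b} ≤ r}

theorem mem_RWset_of_dec {V : Type*} [Fintype V] (G : SimpleGraph V) (hV : 2 ≤ Fintype.card V)
    (r : ℕ) (h : Dec (fun A => cutR G A ≤ r) Set.univ) : r ∈ RWset G := by
  obtain ⟨W, T, ρ, f, hW, hc, hd, hi, hl, hs⟩ := RT.of_dec_univ hV h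
  simp only [xt_zero, add_zero] at hd hl
  refine ⟨W, T, hW, ⟨hc, ?_⟩, hd, f, Set.injOn_univ.1 hi, by simpa using hl, ?_⟩
  · rw [SimpleGraph.isAcyclic_iff_forall_adj_isBridge]
    intro a b hab
    rw [SimpleGraph.isBridge_iff]
    intro hr
    obtain ⟨S, -, h2, h3, -⟩ := hs a b hab
    have := reach_side T a b S h3 hr
    tauto
  · intro a b hab
    obtain ⟨S, -, h2, h3, h4⟩ := hs a b hab
    have ha : ∀ x, (T.deleteEdges {s(a, b)}).Reachable x a → (x ∈ S ↔ a ∈ S) := fun x hx =>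
      reach_side T a b S h3 hx
    have hb : ∀ x, (T.deleteEdges {s(a, b)}).Reachable x b → (x ∈ S ↔ b ∈ S) := fun x hx =>
      reach_side T a b S h3 hx
    simp only [Set.mem_univ, true_and] at h4
    by_cases haS : a ∈ S
    · refine (biadjRank_mono G ?_ ?_).trans h4
      · intro v hv; exact (ha _ hv).2 haS
      · intro v hv hv'; exact h2.1 haS ((hb _ hv).1 hv')
    · rw [biadjRank_symm]
      refine (biadjRank_mono G ?_ ?_).trans h4
      · intro v hv; exact (hb _ hv).2 (by tauto)
      · intro v hv hv'; exact haS ((ha _ hv).1 hv')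


section tree
variable {W : Type} {T : SimpleGraph W}

/-- The side of `a` of the edge `ab`. -/
def side (T : SimpleGraph W) (a b : W) : Set W :=
  {w | (T.deleteEdges {s(a, b)}).Reachable w a}

theorem not_reach (hT : T.IsTree) {a b : W} (h : T.Adj a b) :
    ¬ (T.deleteEdges {s(a, b)}).Reachable a b := by
  have := (SimpleGraph.isAcyclic_iff_forall_adj_isBridge.1 hT.isAcyclic) h
  rwa [SimpleGraph.isBridge_iff] at this

theorem side_disj (hT : T.IsTree) {a b : W} (h : T.Adj a b) {w : W} (h1 : w ∈ side T a b)
    (h2 : w ∈ side T b a) : False := by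
  unfold side at h1 h2
  have h2' : (T.deleteEdges {s(a, b)}).Reachable w b := by
    rw [Sym2.eq_swap]; exact h2
  have h1' : (T.deleteEdges {s(a, b)}).Reachable w a := h1
  exact not_reach hT h (h1'.symm.trans h2')

theorem side_self (a b : W) : a ∈ side T a b := SimpleGraph.Reachable.refl _

theorem side_cover (hT : T.IsTree) {a b : W} (w : W) :
    w ∈ side T a b ∨ w ∈ side T b a := by
  obtain ⟨p⟩ := hT.connected.preconnected w a
  have : ∀ x y (p : T.Walk x y), (y ∈ side T a b ∨ y ∈ side T b a) →
      (x ∈ side T a b ∨ x ∈ side T b a) := by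
    intro x y p
    induction p with
    | nil => exact id
    | @cons u v w h _ ih =>
      intro hw
      by_cases he : s(u, v) = s(a, b)
      · rw [Sym2.eq_iff] at he
        rcases he with ⟨rfl, rfl⟩ | ⟨rfl, rfl⟩
        · exact Or.inl (side_self _ _)
        · exact Or.inr (side_self _ _)
      · have h1 : (T.deleteEdges {s(a, b)}).Adj u v := by
          rw [SimpleGraph.deleteEdges_adj]; exact ⟨h, he⟩
        have h2 : (T.deleteEdges {s(b, a)}).Adj u v := by
          rw [Sym2.eq_swap]; exact h1
        rcases ih hw with h' | h'
        · exact Or.inl (h1.reachable.trans h')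
        · exact Or.inr (h2.reachable.trans h')
  exact this w a p (Or.inl (side_self _ _))

theorem side_step {a b w : W} (h : w ∈ side T a b) (hne : w ≠ a) :
    ∃ x, T.Adj a x ∧ x ≠ b ∧ w ∈ side T x a := by
  classical
  have h' : (T.deleteEdges {s(a, b)}).Reachable a w := SimpleGraph.Reachable.symm h
  obtain ⟨p, hp⟩ := h'.exists_isPath
  cases p with
  | nil => exact absurd rfl hne
  | @cons _ x _ hax q =>
    rw [SimpleGraph.Walk.cons_isPath_iff] at hp
    have hax' := hax
    rw [SimpleGraph.deleteEdges_adj] at hax'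
    refine ⟨x, hax'.1, ?_, ?_⟩
    · rintro rfl
      exact hax'.2 rfl
    · have : (T.deleteEdges {s(x, a)}).Reachable x w := by
        refine ⟨q.transfer _ ?_⟩
        intro e he
        rw [SimpleGraph.edgeSet_deleteEdges]
        refine ⟨?_, ?_⟩
        · have := q.edges_subset_edgeSet he
          rw [SimpleGraph.edgeSet_deleteEdges] at this
          exact this.1
        · intro h
          have h : e = s(x, a) := h
          subst h
          exact hp.2 (q.snd_mem_support_of_mem_edges he)
      exact this.symm

theorem side_sub (hT : T.IsTree) {a b x w : W} (hax : T.Adj a x) (hx : x ≠ b)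
    (h : w ∈ side T x a) : w ∈ side T a b := by
  classical
  obtain ⟨p⟩ : (T.deleteEdges {s(x, a)}).Reachable w x := h
  have hne : ∀ e ∈ p.edges, e ∈ (T.deleteEdges {s(a, b)}).edgeSet := by
    intro e he
    have h1 := p.edges_subset_edgeSet he
    rw [SimpleGraph.edgeSet_deleteEdges] at h1 ⊢
    refine ⟨h1.1, ?_⟩
    intro h2
    have h2 : e = s(a, b) := h2
    subst h2
    have ha := p.fst_mem_support_of_mem_edges he
    exact not_reach hT hax.symm (SimpleGraph.Reachable.symm ⟨p.dropUntil a ha⟩)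
  have r1 : (T.deleteEdges {s(a, b)}).Reachable w x := ⟨p.transfer _ hne⟩
  have r2 : (T.deleteEdges {s(a, b)}).Adj x a := by
    rw [SimpleGraph.deleteEdges_adj]
    refine ⟨hax.symm, ?_⟩
    intro h
    have h : s(x, a) = s(a, b) := h
    rw [Sym2.eq_iff] at h
    rcases h with ⟨rfl, _⟩ | ⟨h, _⟩
    · exact hax.ne rfl
    · exact hx h
  exact r1.trans r2.reachable

theorem dec_side {V : Type*} [Finite W] (hT : T.IsTree)
    (hdeg : ∀ w : W, (T.neighborSet w).ncard = 1 ∨ (T.neighborSet w).ncard = 3)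
    (f : V → W) (hf : Function.Injective f)
    (hl : ∀ w : W, (T.neighborSet w).ncard = 1 ↔ w ∈ Set.range f)
    (P : Set V → Prop) (hP : ∀ a b, T.Adj a b → P (f ⁻¹' side T a b)) (n : ℕ) :
    ∀ a b, T.Adj a b → (side T a b).ncard ≤ n → Dec P (f ⁻¹' side T a b) := by
  induction n with
  | zero =>
    intro a b _ h
    rw [Nat.le_zero, Set.ncard_eq_zero] at h
    have := side_self (T := T) a b
    rw [h] at this
    exact absurd this (by simp)
  | succ n ih =>
    intro a b hab hn
    have hsub : ∀ x, T.Adj a x → x ≠ b → Dec P (f ⁻¹' side T x a) := by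
      intro x hax hx
      apply ih x a hax.symm
      have : (side T x a).ncard < (side T a b).ncard := by
        refine Set.ncard_lt_ncard ⟨fun w hw => side_sub hT hax hx hw, ?_⟩ (Set.toFinite _)
        intro h
        exact side_disj hT hax (side_self _ _) (h (side_self a b))
      omega
    have hPab := hP a b hab
    rcases hdeg a with h1 | h3
    · obtain ⟨v, rfl⟩ := (hl a).1 h1
      obtain ⟨y, hy⟩ := Set.ncard_eq_one.1 h1
      have hby : b = y := by
        have : b ∈ T.neighborSet (f v) := hab
        rw [hy] at this; exact this
      have : f ⁻¹' side T (f v) b = {v} := by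
        ext u
        constructor
        · intro hu
          by_contra hne
          obtain ⟨x, h1, h2, _⟩ := side_step (T := T) hu (fun h => hne (hf h))
          have : x ∈ T.neighborSet (f v) := h1
          rw [hy] at this
          exact h2 (this.trans hby.symm)
        · rintro rfl
          exact side_self _ _
      rw [this] at hPab ⊢
      exact Dec.leaf v hPab
    · have hba : b ∈ T.neighborSet a := hab
      have h2 : (T.neighborSet a \ {b}).ncard = 2 := by
        rw [Set.ncard_sdiff_singleton_of_mem hba, h3]
      obtain ⟨x, y, hxy, he⟩ := Set.ncard_eq_two.1 h2
      have hx : x ∈ T.neighborSet a \ {b} := by rw [he]; simp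
      have hy : y ∈ T.neighborSet a \ {b} := by rw [he]; simp
      have hu : f ⁻¹' side T a b = f ⁻¹' side T x a ∪ f ⁻¹' side T y a := by
        ext u
        constructor
        · intro hu
          have hne : f u ≠ a := by
            intro h
            have := (hl a).2 ⟨u, h⟩
            omega
          obtain ⟨z, h1, h2, h3⟩ := side_step (T := T) hu hne
          have : z ∈ T.neighborSet a \ {b} := ⟨h1, h2⟩
          rw [he] at this
          rcases this with rfl | rfl
          · exact Or.inl h3
          · exact Or.inr h3
        · rintro (h | h)
          · exact side_sub hT hx.1 hx.2 h
          · exact side_sub hT hy.1 hy.2 h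
      rw [hu] at hPab ⊢
      refine Dec.node _ _ (hsub x hx.1 hx.2) (hsub y hy.1 hy.2) ?_ hPab
      rw [Set.disjoint_left]
      intro u h1 h2
      exact side_disj hT hy.1 (side_sub hT hx.1 hxy h1) h2

end tree

theorem dec_of_mem_RWset {V : Type*} [Fintype V] (G : SimpleGraph V) (hV : 2 ≤ Fintype.card V)
    (r : ℕ) (h : r ∈ RWset G) : Dec (fun A => cutR G A ≤ r) Set.univ := by
  obtain ⟨W, T, hW, hT, hdeg, f, hf, hl, hr⟩ := h
  have hP : ∀ a b, T.Adj a b → cutR G (f ⁻¹' side T a b) ≤ r := by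
    intro a b hab
    refine (biadjRank_mono G ?_ ?_).trans (hr a b hab)
    · intro v hv; exact hv
    · intro v hv
      have := (side_cover hT (a := a) (b := b) (f v)).resolve_left hv
      unfold side at this
      rw [Sym2.eq_swap] at this
      exact this
  have hd := fun a b hab => dec_side hT hdeg f hf hl (fun A => cutR G A ≤ r) hP
    (side T a b).ncard a b hab le_rfl
  obtain ⟨v⟩ : Nonempty V := Fintype.card_pos_iff.1 (by omega)
  have h1 := (hl (f v)).2 ⟨v, rfl⟩
  obtain ⟨y, hy⟩ := Set.ncard_eq_one.1 h1
  have hadj : T.Adj (f v) y := by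
    have : y ∈ T.neighborSet (f v) := by rw [hy]; rfl
    exact this
  have : (Set.univ : Set V) = f ⁻¹' side T (f v) y ∪ f ⁻¹' side T y (f v) := by
    ext u
    simpa using side_cover hT (f u)
  have hu := cutR_univ G r
  rw [this] at hu ⊢
  refine Dec.node _ _ (hd _ _ hadj) (hd _ _ hadj.symm) ?_ hu
  rw [Set.disjoint_left]
  intro u h1 h2
  exact side_disj hT hadj h1 h2


/-- The labelled graph `(A, E, ℓ)` is constructible with `k` labels. -/
def Con {V : Type*} {k : ℕ} (A : Set V) (E : V → V → Prop) (l : V → Fin k) : Prop :=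
  ∃ (e : CW k) (φ : e.Vt → V), Function.Injective φ ∧ Set.range φ = A ∧
    (∀ u v, e.adj u v ↔ E (φ u) (φ v)) ∧ ∀ u, e.label u = l (φ u)

section con
variable {V : Type*} {k : ℕ}

theorem Con.congr {A : Set V} {E E' : V → V → Prop} {l l' : V → Fin k} (h : Con A E l)
    (hE : ∀ u ∈ A, ∀ v ∈ A, (E u v ↔ E' u v)) (hl : ∀ u ∈ A, l u = l' u) : Con A E' l' := by
  obtain ⟨e, φ, h1, h2, h3, h4⟩ := h
  have hm : ∀ u, φ u ∈ A := fun u => h2 ▸ ⟨u, rfl⟩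
  exact ⟨e, φ, h1, h2, fun u v => (h3 u v).trans (hE _ (hm u) _ (hm v)),
    fun u => (h4 u).trans (hl _ (hm u))⟩

theorem Con.single (v : V) (i : Fin k) : Con {v} (fun _ _ => False) (fun _ => i) := by
  refine ⟨CW.single i, fun _ => v, ?_, ?_, ?_, ?_⟩
  · intro x y _; exact Subsingleton.elim (α := Unit) x y
  · ext x; constructor
    · rintro ⟨_, rfl⟩; rfl
    · rintro rfl; exact ⟨(), rfl⟩
  · intro u v; rfl
  · intro u; rfl

theorem Con.union {A B : Set V} {E : V → V → Prop} {l : V → Fin k} (hA : Con A E l)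
    (hB : Con B E l) (hd : Disjoint A B) :
    Con (A ∪ B) (fun u v => E u v ∧ ((u ∈ A ∧ v ∈ A) ∨ (u ∈ B ∧ v ∈ B))) l := by
  obtain ⟨a, φ, h1, rfl, h3, h4⟩ := hA
  obtain ⟨b, ψ, g1, rfl, g3, g4⟩ := hB
  have hne : ∀ x y, φ x ≠ ψ y := fun x y h =>
    Set.disjoint_left.1 hd ⟨x, rfl⟩ ⟨y, h.symm⟩
  refine ⟨CW.union a b, Sum.elim φ ψ, ?_, ?_, ?_, ?_⟩
  · exact h1.sumElim g1 hne
  · exact Set.Sum.elim_range φ ψ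
  · rintro (u | u) (v | v)
    · refine (h3 u v).trans ?_
      simp
    · refine iff_of_false (fun h => h) ?_
      rintro ⟨_, ⟨_, y, hy⟩ | ⟨⟨y, hy⟩, _⟩⟩
      · exact hne _ _ hy
      · exact hne _ _ hy.symm
    · refine iff_of_false (fun h => h) ?_
      rintro ⟨_, ⟨⟨y, hy⟩, _⟩ | ⟨_, y, hy⟩⟩
      · exact hne _ _ hy
      · exact hne _ _ hy.symm
    · refine (g3 u v).trans ?_
      simp
  · rintro (u | u)
    · exact h4 u
    · exact g4 u

theorem Con.relabel {A : Set V} {E : V → V → Prop} {l : V → Fin k} (h : Con A E l)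
    (x y : Fin k) : Con A E (fun u => if l u = x then y else l u) := by
  obtain ⟨e, φ, h1, h2, h3, h4⟩ := h
  refine ⟨CW.relabel x y e, φ, h1, h2, h3, ?_⟩
  intro (u : e.Vt)
  change (if e.label u = x then y else e.label u) = _
  rw [h4]

theorem Con.join {A : Set V} {E : V → V → Prop} {l : V → Fin k} (h : Con A E l)
    (x y : Fin k) : Con A (fun u v => E u v ∨ (x ≠ y ∧ ((l u = x ∧ l v = y) ∨
        (l u = y ∧ l v = x)))) l := by
  obtain ⟨e, φ, h1, h2, h3, h4⟩ := h
  refine ⟨CW.join x y e, φ, h1, h2, ?_, h4⟩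
  intro (u : e.Vt) (v : e.Vt)
  change (e.adj u v ∨ (x ≠ y ∧ ((e.label u = x ∧ e.label v = y) ∨
        (e.label u = y ∧ e.label v = x)))) ↔ _
  rw [h3, h4, h4]

theorem cw_perm (s : Equiv.Perm (Fin k)) (e : CW k) : ∃ (e' : CW k) (φ : e'.Vt → e.Vt),
    Function.Bijective φ ∧ (∀ u v, e'.adj u v ↔ e.adj (φ u) (φ v)) ∧
    ∀ u, e'.label u = s (e.label (φ u)) := by
  induction e with
  | single i => exact ⟨CW.single (s i), id, Function.bijective_id, fun u v => Iff.rfl, fun u => rfl⟩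
  | union a b iha ihb =>
    obtain ⟨a', φ, h1, h2, h3⟩ := iha
    obtain ⟨b', ψ, g1, g2, g3⟩ := ihb
    refine ⟨CW.union a' b', Sum.map φ ψ, ?_, ?_, ?_⟩
    · exact Sum.map_bijective.2 ⟨h1, g1⟩
    · rintro (u | u) (v | v)
      · exact h2 u v
      · exact Iff.rfl
      · exact Iff.rfl
      · exact g2 u v
    · rintro (u | u)
      · exact h3 u
      · exact g3 u
  | relabel x y a iha =>
    obtain ⟨a', φ, h1, h2, h3⟩ := iha
    refine ⟨CW.relabel (s x) (s y) a', φ, h1, h2, ?_⟩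
    intro (u : a'.Vt)
    change (if a'.label u = s x then s y else a'.label u) =
      s (if a.label (φ u) = x then y else a.label (φ u))
    rw [h3]
    by_cases h : a.label (φ u) = x
    · simp [h]
    · simp [h]
  | join x y a iha =>
    obtain ⟨a', φ, h1, h2, h3⟩ := iha
    refine ⟨CW.join (s x) (s y) a', φ, h1, ?_, h3⟩
    intro (u : a'.Vt) (v : a'.Vt)
    change (a'.adj u v ∨ (s x ≠ s y ∧ ((a'.label u = s x ∧ a'.label v = s y) ∨
        (a'.label u = s y ∧ a'.label v = s x)))) ↔
      (a.adj (φ u) (φ v) ∨ (x ≠ y ∧ ((a.label (φ u) = x ∧ a.label (φ v) = y) ∨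
        (a.label (φ u) = y ∧ a.label (φ v) = x))))
    rw [h2, h3, h3]
    simp only [ne_eq, s.injective.eq_iff]

theorem Con.perm {A : Set V} {E : V → V → Prop} {l : V → Fin k} (h : Con A E l)
    (s : Equiv.Perm (Fin k)) : Con A E (fun u => s (l u)) := by
  obtain ⟨e, φ, h1, h2, h3, h4⟩ := h
  obtain ⟨e', ψ, g1, g2, g3⟩ := cw_perm s e
  refine ⟨e', φ ∘ ψ, h1.comp g1.1, ?_, ?_, ?_⟩
  · rw [g1.2.range_comp, h2]
  · intro u v
    exact (g2 u v).trans (h3 _ _)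
  · intro u
    rw [g3, h4]; rfl

theorem Con.joins {A : Set V} {E : V → V → Prop} {l : V → Fin k} (h : Con A E l)
    (D : Finset (Fin k × Fin k)) : Con A (fun u v => E u v ∨ ∃ x y, (x, y) ∈ D ∧ x ≠ y ∧
      ((l u = x ∧ l v = y) ∨ (l u = y ∧ l v = x))) l := by
  induction D using Finset.induction_on with
  | empty => exact h.congr (by simp) (by simp)
  | insert p D _ ih =>
    refine (ih.join p.1 p.2).congr ?_ (by simp)
    intro u _ v _
    constructor
    · rintro ((h | ⟨x, y, h, h'⟩) | h)
      · exact Or.inl h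
      · exact Or.inr ⟨x, y, Finset.mem_insert_of_mem h, h'⟩
      · exact Or.inr ⟨p.1, p.2, Finset.mem_insert_self _ _, h⟩
    · rintro (h | ⟨x, y, h, h'⟩)
      · exact Or.inl (Or.inl h)
      · rcases Finset.mem_insert.1 h with rfl | h
        · exact Or.inr h'
        · exact Or.inl (Or.inr ⟨x, y, h, h'⟩)

theorem Con.relabels {A : Set V} {E : V → V → Prop} {l : V → Fin k} (h : Con A E l)
    (g : Fin k → Fin k) (hg : ∀ i, g (g i) = g i) : Con A E (fun u => g (l u)) := by
  have : ∀ D : Finset (Fin k), Con A E (fun u => if l u ∈ D then g (l u) else l u) := by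
    intro D
    induction D using Finset.induction_on with
    | empty => exact h.congr (by simp) (by simp)
    | insert p D hp ih =>
      refine (ih.relabel p (g p)).congr (by simp) ?_
      intro u _
      by_cases h1 : l u = p
      · simp [h1, hp]
      · by_cases h2 : l u ∈ D
        · simp only [h2, if_true, Finset.mem_insert, or_true]
          split_ifs with h3
          · rw [← h3, hg]
          · rfl
        · simp [h1, h2]
  exact (this Finset.univ).congr (by simp) (by simp)

/-- The inductive invariant. -/
def Inv (G : SimpleGraph V) (z : Fin k) (A : Set V) : Prop :=
  ∃ l : V → Fin k, Con A G.Adj l ∧ (∀ u ∈ A, l u = z ↔ nb G A u = ∅) ∧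
    ∀ u ∈ A, ∀ v ∈ A, l u = l v ↔ nb G A u = nb G A v

theorem ncard_labels [Finite V] (G : SimpleGraph V) (z : Fin k) (A : Set V) (l : V → Fin k)
    (h1 : ∀ u ∈ A, l u = z ↔ nb G A u = ∅)
    (h2 : ∀ u ∈ A, ∀ v ∈ A, l u = l v ↔ nb G A u = nb G A v) {m : ℕ}
    (hm : (nb G A '' A \ {∅}).ncard ≤ m) : (l '' A \ {z}).ncard ≤ m := by
  classical
  refine le_trans ?_ hm
  have hex : ∀ i ∈ l '' A \ {z}, ∃ u ∈ A, l u = i := by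
    rintro i ⟨⟨u, hu, rfl⟩, _⟩
    exact ⟨u, hu, rfl⟩
  have hne : Nonempty V ∨ IsEmpty V := (isEmpty_or_nonempty V).symm
  rcases hne with hne | hne
  swap
  · rw [Set.eq_empty_of_isEmpty A]; simp
  choose! c hc hc' using hex
  refine Set.ncard_le_ncard_of_injOn (fun i => nb G A (c i)) ?_ ?_ (Set.toFinite _)
  · intro i hi
    refine ⟨⟨c i, hc i hi, rfl⟩, ?_⟩
    intro h0
    have := (h1 _ (hc i hi)).2 h0
    rw [hc' i hi] at this
    exact hi.2 this
  · intro i hi j hj hij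
    have := (h2 _ (hc i hi) _ (hc j hj)).2 hij
    rwa [hc' i hi, hc' j hj] at this

theorem exists_perm (z : Fin k) (L M : Set (Fin k)) (m : ℕ) (hk : 2 * m + 1 ≤ k)
    (hL : (L \ {z}).ncard ≤ m) (hM : (M \ {z}).ncard ≤ m) :
    ∃ s : Equiv.Perm (Fin k), s z = z ∧ ∀ i ∈ M, i ≠ z → s i ∉ L := by
  classical
  set L' : Finset (Fin k) := (L \ {z}).toFinset with hL'
  set M' : Finset (Fin k) := (M \ {z}).toFinset with hM'
  have cL : L'.card ≤ m := by rw [hL', ← Set.ncard_eq_toFinset_card']; exact hL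
  have cM : M'.card ≤ m := by rw [hM', ← Set.ncard_eq_toFinset_card']; exact hM
  have hzL : z ∉ L' := by simp [hL']
  have hzM : z ∉ M' := by simp [hM']
  set R : Finset (Fin k) := (insert z L')ᶜ with hR
  have cR : M'.card ≤ R.card := by
    rw [hR, Finset.card_compl, Finset.card_insert_of_notMem hzL, Fintype.card_fin]
    omega
  obtain ⟨R', hR', hc⟩ := Finset.exists_subset_card_eq cR
  let b : M' ≃ R' := Finset.equivOfCardEq hc.symm
  let f : Fin k → Fin k := fun i => if h : i ∈ M' then (b ⟨i, h⟩ : Fin k) else z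
  have hfz : f z = z := by simp [f, hzM]
  have hfM : ∀ i (h : i ∈ M'), f i = b ⟨i, h⟩ := by intro i h; simp [f, h]
  have hfR : ∀ i ∈ M', f i ∈ R := by
    intro i h
    rw [hfM i h]
    exact hR' (b ⟨i, h⟩).2
  have hfne : ∀ i ∈ M', f i ≠ z := by
    intro i h h0
    have := hfR i h
    rw [h0] at this
    simp [hR] at this
  have hinj : Set.InjOn f (insert z M' : Finset (Fin k)) := by
    intro i hi j hj hij
    rcases Finset.mem_insert.1 (Finset.mem_coe.1 hi) with rfl | hi
    · rcases Finset.mem_insert.1 (Finset.mem_coe.1 hj) with rfl | hj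
      · rfl
      · rw [hfz] at hij
        exact absurd hij.symm (hfne j hj)
    · rcases Finset.mem_insert.1 (Finset.mem_coe.1 hj) with rfl | hj
      · rw [hfz] at hij
        exact absurd hij (hfne i hi)
      · rw [hfM i hi, hfM j hj] at hij
        have := b.injective (Subtype.ext hij)
        simpa using this
  obtain ⟨g, hg⟩ := Finset.exists_equiv_extend_of_card_eq (t := (Finset.univ : Finset (Fin k)))
    (by simp) (Finset.subset_univ _) hinj
  refine ⟨g.trans (Equiv.subtypeUnivEquiv (by simp)), ?_, ?_⟩
  · change (g z : Fin k) = z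
    rw [hg z (Finset.mem_insert_self _ _), hfz]
  · intro i hi hne hL0
    have hiM : i ∈ M' := by simp [hM', hi, hne]
    have e1 : (g i : Fin k) = f i := hg i (Finset.mem_insert_of_mem hiM)
    change (g i : Fin k) ∈ L at hL0
    rw [e1] at hL0
    have h2 := hfR i hiM
    simp only [hR, Finset.mem_compl, Finset.mem_insert, not_or] at h2
    apply h2.2
    simp [hL', hL0, h2.1]

/-- the merging step: labels determine the outside neighbourhoods -/
theorem Inv.merge {G : SimpleGraph V} {z : Fin k} {C : Set V} {l : V → Fin k}
    (hC : Con C G.Adj l) (hz : ∀ u ∈ C, l u = z → nb G C u = ∅)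
    (hl : ∀ u ∈ C, ∀ v ∈ C, l u = l v → nb G C u = nb G C v) : Inv G z C := by
  classical
  let N : Fin k → Set V := fun i => {w | ∃ u ∈ C, l u = i ∧ w ∈ nb G C u}
  have hN : ∀ u ∈ C, N (l u) = nb G C u := by
    intro u hu
    ext w
    constructor
    · rintro ⟨v, hv, h, hw⟩
      rwa [hl v hv u hu h] at hw
    · intro hw; exact ⟨u, hu, rfl, hw⟩
  have hNz : N z = ∅ := by
    ext w
    constructor
    · rintro ⟨v, hv, h, hw⟩
      rwa [hz v hv h] at hw
    · intro h; exact absurd h (by simp)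
  have : Nonempty (Fin k) := ⟨z⟩
  let g : Fin k → Fin k := fun i => if N i = ∅ then z else Function.invFun N (N i)
  have hNg : ∀ i, N (g i) = N i := by
    intro i
    by_cases h : N i = ∅
    · simp [g, h, hNz]
    · simp only [g, h, if_false]
      exact Function.invFun_eq ⟨i, rfl⟩
  have hg0 : ∀ i j, N i = N j → g i = g j := by
    intro i j h; simp only [g, h]
  refine ⟨fun u => g (l u), hC.relabels g (fun i => hg0 _ _ (hNg i)), ?_, ?_⟩
  · intro u hu
    rw [← hN u hu]
    constructor
    · intro h
      have h : g _ = _ := h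
      rw [← hNg, h, hNz]
    · intro h; simp [g, h]
  · intro u hu v hv
    rw [← hN u hu, ← hN v hv]
    constructor
    · intro h
      have h : g _ = _ := h
      rw [← hNg, h, hNg]
    · exact hg0 _ _

theorem Inv.of_leaf [Finite V] (G : SimpleGraph V) (z : Fin k) (m : ℕ) (hk : 2 * m + 1 ≤ k) (v : V)
    (hm : (nb G {v} '' {v} \ {∅}).ncard ≤ m) : Inv G z {v} := by
  by_cases h : nb G {v} v = ∅
  · refine ⟨fun _ => z, (Con.single v z).congr ?_ (by simp), ?_, ?_⟩
    · rintro _ rfl _ rfl; simp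
    · rintro _ rfl; simp [h]
    · rintro _ rfl _ rfl; simp
  · have : 1 ≤ m := by
      refine le_trans ?_ hm
      rw [Nat.one_le_iff_ne_zero]
      refine Set.ncard_ne_zero_of_mem (a := nb G {v} v) ?_ (Set.toFinite _)
      exact ⟨⟨v, rfl, rfl⟩, h⟩
    have : Nontrivial (Fin k) := Fin.nontrivial_iff_two_le.2 (by omega)
    obtain ⟨i, hi⟩ := exists_ne z
    refine ⟨fun _ => i, (Con.single v i).congr ?_ (by simp), ?_, ?_⟩
    · rintro _ rfl _ rfl; simp
    · rintro _ rfl; simp [h, hi]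
    · rintro _ rfl _ rfl; simp

theorem Inv.union [Finite V] (G : SimpleGraph V) (z : Fin k) (m : ℕ) (hk : 2 * m + 1 ≤ k)
    {A B : Set V} (hd : Disjoint A B) (hA : Inv G z A) (hB : Inv G z B)
    (mA : (nb G A '' A \ {∅}).ncard ≤ m) (mB : (nb G B '' B \ {∅}).ncard ≤ m) :
    Inv G z (A ∪ B) := by
  classical
  obtain ⟨a, cA, zA, eA⟩ := hA
  obtain ⟨b₀, cB₀, zB₀, eB₀⟩ := hB
  obtain ⟨s, hsz, hs⟩ := exists_perm z (a '' A) (b₀ '' B) m hk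
    (ncard_labels G z A a zA eA mA) (ncard_labels G z B b₀ zB₀ eB₀ mB)
  have hBA : ∀ v ∈ B, v ∉ A := fun v hv hv' => Set.disjoint_left.1 hd hv' hv
  have hAB : ∀ v ∈ A, v ∉ B := fun v hv hv' => Set.disjoint_left.1 hd hv hv'
  let l : V → Fin k := fun u => if u ∈ A then a u else s (b₀ u)
  have lA : ∀ u ∈ A, l u = a u := fun u hu => by simp [l, hu]
  have lB : ∀ u ∈ B, l u = s (b₀ u) := fun u hu => by simp [l, hBA u hu]
  have cA' : Con A G.Adj l := cA.congr (by simp) (fun u hu => (lA u hu).symm)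
  have cB' : Con B G.Adj l := (cB₀.perm s).congr (by simp) (fun u hu => (lB u hu).symm)
  have zA' : ∀ u ∈ A, l u = z ↔ nb G A u = ∅ := fun u hu => by rw [lA u hu]; exact zA u hu
  have eA' : ∀ u ∈ A, ∀ v ∈ A, l u = l v ↔ nb G A u = nb G A v := fun u hu v hv => by
    rw [lA u hu, lA v hv]; exact eA u hu v hv
  have zB' : ∀ u ∈ B, l u = z ↔ nb G B u = ∅ := fun u hu => by
    rw [lB u hu, ← zB₀ u hu]
    nth_rewrite 1 [← hsz]
    exact s.injective.eq_iff
  have eB' : ∀ u ∈ B, ∀ v ∈ B, l u = l v ↔ nb G B u = nb G B v := fun u hu v hv => by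
    rw [lB u hu, lB v hv, s.injective.eq_iff]; exact eB₀ u hu v hv
  -- nonzero labels do not mix
  have mix : ∀ u ∈ A, ∀ v ∈ B, l u = l v → l u = z := by
    intro u hu v hv h
    by_contra hne
    have hvz : b₀ v ≠ z := by
      intro h0
      apply hne
      rw [h, lB v hv, h0, hsz]
    apply hs (b₀ v) ⟨v, hv, rfl⟩ hvz
    rw [← lB v hv, ← h, lA u hu]
    exact ⟨u, hu, rfl⟩
  have nzA : ∀ u ∈ A, ∀ v ∈ B, G.Adj u v → l u ≠ z := by
    intro u hu v hv h h0
    have : v ∈ nb G A u := ⟨hBA v hv, h⟩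
    rw [(zA' u hu).1 h0] at this
    exact this
  have nzB : ∀ u ∈ A, ∀ v ∈ B, G.Adj u v → l v ≠ z := by
    intro u hu v hv h h0
    have : u ∈ nb G B v := ⟨hAB u hu, h.symm⟩
    rw [(zB' v hv).1 h0] at this
    exact this
  let D : Finset (Fin k × Fin k) := Finset.univ.filter fun p =>
    ∃ u ∈ A, ∃ v ∈ B, G.Adj u v ∧ l u = p.1 ∧ l v = p.2
  have hD : ∀ x y, (x, y) ∈ D ↔ ∃ u ∈ A, ∃ v ∈ B, G.Adj u v ∧ l u = x ∧ l v = y := by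
    intro x y; simp [D]
  have adjT : ∀ u ∈ A, ∀ v ∈ B, ∀ u' ∈ A, ∀ v' ∈ B, l u = l u' → l v = l v' → G.Adj u v →
      G.Adj u' v' := by
    intro u hu v hv u' hu' v' hv' h1 h2 h
    have e1 : v ∈ nb G A u := ⟨hBA v hv, h⟩
    rw [(eA' u hu u' hu').1 h1] at e1
    have e2 : u' ∈ nb G B v := ⟨hAB u' hu', e1.2.symm⟩
    rw [(eB' v hv v' hv').1 h2] at e2
    exact e2.2.symm
  have cC : Con (A ∪ B) G.Adj l := by
    refine ((cA'.union cB' hd).joins D).congr ?_ (by simp)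
    have same_A : ∀ u ∈ A, ∀ v ∈ A, ∀ x y, (x, y) ∈ D →
        ¬ ((l u = x ∧ l v = y) ∨ (l u = y ∧ l v = x)) := by
      intro u hu v hv x y hxy h
      obtain ⟨p, hp, q, hq, hpq, h1, h2⟩ := (hD x y).1 hxy
      rcases h with ⟨_, h4⟩ | ⟨h4, _⟩
      · have := mix v hv q hq (h4.trans h2.symm)
        exact nzB p hp q hq hpq (by rw [h2, ← h4, this])
      · have := mix u hu q hq (h4.trans h2.symm)
        exact nzB p hp q hq hpq (by rw [h2, ← h4, this])
    have same_B : ∀ u ∈ B, ∀ v ∈ B, ∀ x y, (x, y) ∈ D →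
        ¬ ((l u = x ∧ l v = y) ∨ (l u = y ∧ l v = x)) := by
      intro u hu v hv x y hxy h
      obtain ⟨p, hp, q, hq, hpq, h1, h2⟩ := (hD x y).1 hxy
      rcases h with ⟨h4, _⟩ | ⟨_, h4⟩
      · exact nzA p hp q hq hpq (mix p hp u hu (h1.trans h4.symm))
      · exact nzA p hp q hq hpq (mix p hp v hv (h1.trans h4.symm))
    have diff_AB : ∀ u ∈ A, ∀ v ∈ B, (∃ x y, (x, y) ∈ D ∧ x ≠ y ∧
        ((l u = x ∧ l v = y) ∨ (l u = y ∧ l v = x))) ↔ G.Adj u v := by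
      intro u hu v hv
      constructor
      · rintro ⟨x, y, hxy, _, h⟩
        obtain ⟨p, hp, q, hq, hpq, h1, h2⟩ := (hD x y).1 hxy
        rcases h with ⟨h3, h4⟩ | ⟨h3, h4⟩
        · exact adjT p hp q hq u hu v hv (h1.trans h3.symm) (h2.trans h4.symm) hpq
        · exact absurd (mix p hp v hv (h1.trans h4.symm)) (nzA p hp q hq hpq)
      · intro h
        refine ⟨l u, l v, (hD _ _).2 ⟨u, hu, v, hv, h, rfl, rfl⟩, ?_, Or.inl ⟨rfl, rfl⟩⟩
        intro h0
        exact nzA u hu v hv h (mix u hu v hv h0)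
    rintro u (hu | hu) v (hv | hv)
    · constructor
      · rintro (h | ⟨x, y, h, _, h'⟩)
        · exact h.1
        · exact absurd h' (same_A u hu v hv x y h)
      · intro h; exact Or.inl ⟨h, Or.inl ⟨hu, hv⟩⟩
    · rw [diff_AB u hu v hv]
      constructor
      · rintro (h | h)
        · exact h.1
        · exact h
      · exact Or.inr
    · have : (∃ x y, (x, y) ∈ D ∧ x ≠ y ∧ ((l u = x ∧ l v = y) ∨ (l u = y ∧ l v = x))) ↔
          G.Adj u v := by
        rw [G.adj_comm, ← diff_AB v hv u hu]
        constructor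
        · rintro ⟨x, y, h1, h2, h3⟩
          exact ⟨x, y, h1, h2, by tauto⟩
        · rintro ⟨x, y, h1, h2, h3⟩
          exact ⟨x, y, h1, h2, by tauto⟩
      rw [this]
      constructor
      · rintro (h | h)
        · exact h.1
        · exact h
      · exact Or.inr
    · constructor
      · rintro (h | ⟨x, y, h, _, h'⟩)
        · exact h.1
        · exact absurd h' (same_B u hu v hv x y h)
      · intro h; exact Or.inl ⟨h, Or.inr ⟨hu, hv⟩⟩
  have subA : ∀ u, nb G (A ∪ B) u = nb G A u \ B := by
    intro u; ext w; simp only [nb, Set.mem_union, Set.mem_sdiff, Set.mem_ofPred_eq]; tauto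
  have subB : ∀ u, nb G (A ∪ B) u = nb G B u \ A := by
    intro u; ext w; simp only [nb, Set.mem_union, Set.mem_sdiff, Set.mem_ofPred_eq]; tauto
  have hzC : ∀ u ∈ A ∪ B, l u = z → nb G (A ∪ B) u = ∅ := by
    rintro u (hu | hu) h
    · rw [subA, (zA' u hu).1 h]; simp
    · rw [subB, (zB' u hu).1 h]; simp
  refine Inv.merge cC hzC ?_
  rintro u (hu | hu) v (hv | hv) h
  · rw [subA, subA, (eA' u hu v hv).1 h]
  · have h0 := mix u hu v hv h
    rw [hzC u (Or.inl hu) h0, hzC v (Or.inr hv) (h ▸ h0)]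
  · have h0 := mix v hv u hu h.symm
    rw [hzC v (Or.inl hv) h0, hzC u (Or.inr hu) (h ▸ h0)]
  · rw [subB, subB, (eB' u hu v hv).1 h]

theorem inv_of_dec [Fintype V] (G : SimpleGraph V) (r : ℕ) (z : Fin (2 ^ (r + 1) - 1)) {A : Set V}
    (h : Dec (fun A => cutR G A ≤ r) A) : Inv G z A := by
  have hk : 2 * (2 ^ r - 1) + 1 ≤ 2 ^ (r + 1) - 1 := by
    have : 1 ≤ 2 ^ r := Nat.one_le_two_pow
    rw [pow_succ]; omega
  induction h with
  | leaf v hv => exact Inv.of_leaf G z _ hk v (ncard_nb G _ r hv)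
  | node A B hA hB hd _ h1 h2 =>
    exact Inv.union G z _ hk hd h1 h2 (ncard_nb G _ r hA.holds) (ncard_nb G _ r hB.holds)

end con

/-- The set whose infimum is the clique-width. -/
def CWset {V : Type*} (G : SimpleGraph V) : Set ℕ :=
  {c : ℕ | ∃ (e : CW c) (φ : V ≃ e.Vt), ∀ u v : V, G.Adj u v ↔ e.adj (φ u) (φ v)}

theorem mem_CWset_of_dec {V : Type*} [Fintype V] (G : SimpleGraph V) (r : ℕ)
    (h : Dec (fun A => cutR G A ≤ r) Set.univ) : 2 ^ (r + 1) - 1 ∈ CWset G := by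
  have hpos : 0 < 2 ^ (r + 1) - 1 := by
    have : 1 ≤ 2 ^ r := Nat.one_le_two_pow
    rw [pow_succ]; omega
  obtain ⟨l, ⟨e, φ, h1, h2, h3, h4⟩, -, -⟩ := inv_of_dec G r ⟨0, hpos⟩ h
  let ψ := Equiv.ofBijective φ ⟨h1, Set.range_eq_univ.1 h2⟩
  refine ⟨e, ψ.symm, ?_⟩
  intro u v
  rw [h3]
  change _ ↔ G.Adj (ψ (ψ.symm u)) (ψ (ψ.symm v))
  simp

theorem dec_of_mem_CWset {V : Type*} [Fintype V] (G : SimpleGraph V) (c : ℕ)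
    (h : c ∈ CWset G) : Dec (fun A => cutR G A ≤ c) Set.univ := by
  obtain ⟨e, φ, h⟩ := h
  have hr : Set.range φ.symm = Set.univ := φ.symm.surjective.range_eq
  have := dec_of_cw G e φ.symm (fun _ _ => False) φ.symm.injective ?_ ?_
  · rwa [hr] at this
  · intro u v; rw [h]; simp
  · intro u v _ w hw; rw [hr] at hw; exact absurd (Set.mem_univ w) hw

end RWCW

/-- Let `G` be a finite simple graph with at least 2 vertices,
let `r` be its rank-width and `c` its clique-width.  Then `r ≤ c` and
`c ≤ 2^(r+1) − 1`. -/
theorem stmt_12 {V : Type*} [Fintype V] (G : SimpleGraph V)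
    (hV : 2 ≤ Fintype.card V) :
    rankWidth G ≤ cliqueWidth G ∧
    cliqueWidth G ≤ 2 ^ (rankWidth G + 1) - 1 := by
  have hne : Nonempty V := Fintype.card_pos_iff.1 (by omega)
  have hdec : RWCW.Dec (fun A => RWCW.cutR G A ≤ Fintype.card V) Set.univ :=
    RWCW.Dec.trivial (fun A => RWCW.cutR_le_card G A) _ Set.univ_nonempty
  have hc : cliqueWidth G ∈ RWCW.CWset G :=
    Nat.sInf_mem (s := RWCW.CWset G) ⟨_, RWCW.mem_CWset_of_dec G _ hdec⟩
  have h1 : cliqueWidth G ∈ RWCW.RWset G :=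
    RWCW.mem_RWset_of_dec G hV _ (RWCW.dec_of_mem_CWset G _ hc)
  have hr : rankWidth G ∈ RWCW.RWset G := Nat.sInf_mem (s := RWCW.RWset G) ⟨_, h1⟩
  exact ⟨Nat.sInf_le (s := RWCW.RWset G) h1,
    Nat.sInf_le (s := RWCW.CWset G)
      (RWCW.mem_CWset_of_dec G _ (RWCW.dec_of_mem_RWset G hV _ hr))⟩
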